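/- Let q ≥ 3 be an integer, a_0 ∈ ℤ, and let (a_i)_{i≥1} be an infinite dual q-regular sequence of nonzero integers. Then for the convergents of the λ_q-continued fraction [a_0; a_1, a_2, …] one has q_n ≠ 0 for all n ≥ 0 and the sequence p_n/q_n converges in ℝ; that is, every dual regular λ_q-CF converges. -/

import Mathlib

open Filter Topology

/-- `λ_q = 2 cos (π/q)`. -/
noncomputable def lamq (q : ℕ) : ℝ := 2 * Real.cos (Real.pi / q)

/-- `h_q = (q-2)/2` for even `q` and `(q-3)/2` for odd `q`. -/
def hQ (q : ℕ) : ℕ := if Even q then (q - 2) / 2 else (q - 3) / 2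

/-- Forbidden blocks for the nearest `λ_q`-multiple continued fractions.
For `ε ∈ {1,-1}`: the block `(ε)^{h_q+1}`; for even `q` the blocks `((ε)^{h_q}, ε·m)`, `m ≥ 1`;
for odd `q` (including `q = 3`, where `h_q = 0`) the blocks `((ε)^{h_q}, ε·2, (ε)^{h_q}, ε·m)`,
`m ≥ 1`. -/
def IsForbidden (q : ℕ) (L : List ℤ) : Prop :=
  ∃ ε : ℤ, (ε = 1 ∨ ε = -1) ∧
    (L = List.replicate (hQ q + 1) ε ∨
      (if Even q then
        ∃ m : ℤ, 1 ≤ m ∧ L = List.replicate (hQ q) ε ++ [ε * m]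
      else
        ∃ m : ℤ, 1 ≤ m ∧
          L = List.replicate (hQ q) ε ++ ε * 2 :: (List.replicate (hQ q) ε ++ [ε * m])))

/-- An infinite sequence is `q`-regular if no finite subblock is forbidden. -/
def RegularSeq (q : ℕ) (a : ℕ → ℤ) : Prop :=
  ∀ (l len : ℕ), ¬ IsForbidden q (List.ofFn fun j : Fin len => a (l + (j : ℕ)))

/-- An infinite sequence is dual `q`-regular if no reversed finite subblock is forbidden. -/
def DualRegularSeq (q : ℕ) (a : ℕ → ℤ) : Prop :=
  ∀ (l len : ℕ), ¬ IsForbidden q (List.ofFn fun j : Fin len => a (l + (j : ℕ))).reverse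

/-- A finite sequence is `q`-regular if no contiguous subblock is forbidden. -/
def RegularList (q : ℕ) (L : List ℤ) : Prop :=
  ∀ B : List ℤ, B <:+: L → ¬ IsForbidden q B

/-- Numerators of the convergents: `p₀ = a₀λ`, `p₁ = a₁λ·p₀ - 1`,
`pₙ = aₙλ·pₙ₋₁ - pₙ₋₂` (so that `p₋₁ = 1`, `p₋₂ = 0`).  Here `A n` is the digit `aₙ`. -/
noncomputable def cfP (lam : ℝ) (A : ℕ → ℤ) : ℕ → ℝ
  | 0 => (A 0 : ℝ) * lam
  | 1 => (A 1 : ℝ) * lam * ((A 0 : ℝ) * lam) - 1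
  | (n + 2) => (A (n + 2) : ℝ) * lam * cfP lam A (n + 1) - cfP lam A n

/-- Denominators of the convergents: `q₀ = 1`, `q₁ = a₁λ`,
`qₙ = aₙλ·qₙ₋₁ - qₙ₋₂` (so that `q₋₁ = 0`, `q₋₂ = -1`). -/
noncomputable def cfQ (lam : ℝ) (A : ℕ → ℤ) : ℕ → ℝ
  | 0 => 1
  | 1 => (A 1 : ℝ) * lam
  | (n + 2) => (A (n + 2) : ℝ) * lam * cfQ lam A (n + 1) - cfQ lam A n

/-- The λ-continued fraction with digit sequence `A` converges to `x`. -/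
def CFConvergesTo (lam : ℝ) (A : ℕ → ℤ) (x : ℝ) : Prop :=
  (∀ n, cfQ lam A n ≠ 0) ∧
    Filter.Tendsto (fun n => cfP lam A n / cfQ lam A n) Filter.atTop (nhds x)

/-- The value `p_L/q_L` of the finite continued fraction `[a₀; a₁, …, a_L]`. -/
noncomputable def cfValList (lam : ℝ) (a0 : ℤ) (L : List ℤ) : ℝ :=
  cfP lam (fun i => (a0 :: L).getD i 0) L.length /
    cfQ lam (fun i => (a0 :: L).getD i 0) L.length

/-- The last denominator `q_L` of the finite continued fraction `[a₀; a₁, …, a_L]`. -/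
noncomputable def cfDenList (lam : ℝ) (a0 : ℤ) (L : List ℤ) : ℝ :=
  cfQ lam (fun i => (a0 :: L).getD i 0) L.length

/-- The modified floor: `⌊t⌋* = ⌈t⌉ - 1` for `t > 0` and `⌊t⌋* = ⌊t⌋` for `t ≤ 0`. -/
noncomputable def floorstar (t : ℝ) : ℤ := if 0 < t then ⌈t⌉ - 1 else ⌊t⌋

/-- The nearest `λ`-multiple: `⟨y⟩ = ⌊y/λ + 1/2⌋*`. -/
noncomputable def nearestLam (lam : ℝ) (x : ℝ) : ℤ := floorstar (x / lam + 1 / 2)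

/-- The interval map `f_q` on `I_q = [-λ/2, λ/2]`. -/
noncomputable def fq (lam : ℝ) (x : ℝ) : ℝ :=
  if x = 0 then 0 else -1 / x - (nearestLam lam (-1 / x) : ℝ) * lam

/-- `R_q`: equal to `1` for even `q`, and the positive root of `R² + (2-λ_q)R = 1` for odd `q`. -/
noncomputable def Rq (q : ℕ) : ℝ :=
  if Even q then 1 else (lamq q - 2 + Real.sqrt ((2 - lamq q) ^ 2 + 4)) / 2

/-- `r_q = R_q - λ_q`. -/
noncomputable def rq (q : ℕ) : ℝ := Rq q - lamq q

/-- The map `⟨·⟩*` used by the dual algorithm. -/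
noncomputable def nearestDual (lam R y : ℝ) : ℤ :=
  if 0 ≤ y then floorstar (y / lam + 1 - R / lam) else floorstar (y / lam + R / lam)

/-- The dual interval map `f_q^*` on `I_{R_q} = [-R_q, R_q]`. -/
noncomputable def fqstar (lam R : ℝ) (x : ℝ) : ℝ :=
  if x = 0 then 0 else -1 / x - (nearestDual lam R (-1 / x) : ℝ) * lam

/-- The matrix `S = [[0,-1],[1,0]]` as an element of `SL(2,ℝ)`. -/
noncomputable def matS : Matrix.SpecialLinearGroup (Fin 2) ℝ :=
  ⟨!![0, -1; 1, 0], by norm_num [Matrix.det_fin_two_of]⟩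

/-- The matrix `T = [[1,λ],[0,1]]` as an element of `SL(2,ℝ)`. -/
noncomputable def matT (lam : ℝ) : Matrix.SpecialLinearGroup (Fin 2) ℝ :=
  ⟨!![1, lam; 0, 1], by norm_num [Matrix.det_fin_two_of]⟩

/-- The Hecke triangle group `G_q`, the subgroup of `SL(2,ℝ)` generated by `S` and `T_q`. -/
noncomputable def Hecke (q : ℕ) : Subgroup (Matrix.SpecialLinearGroup (Fin 2) ℝ) :=
  Subgroup.closure {matS, matT (lamq q)}

/-- The Möbius action of `g` on `x ∈ ℝ`. -/
noncomputable def moeb (g : Matrix.SpecialLinearGroup (Fin 2) ℝ) (x : ℝ) : ℝ :=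
  (g.val 0 0 * x + g.val 0 1) / (g.val 1 0 * x + g.val 1 1)

/-- `x` and `y` are `G_q`-equivalent. -/
def GqEquiv (q : ℕ) (x y : ℝ) : Prop :=
  ∃ g ∈ Hecke q, (g.val 1 0 * x + g.val 1 1 ≠ 0) ∧ moeb g x = y

/-- Two sequences have a common tail. -/
def CommonTail (a b : ℕ → ℤ) : Prop := ∃ m n : ℕ, ∀ k : ℕ, a (m + k) = b (n + k)

/-- The period block of `ρ_q`: `(3)` for `q = 3`, `((1)^{h_q-1}, 2)` for even `q`
and `((1)^{h_q}, 2, (1)^{h_q-1}, 2)` for odd `q ≥ 5`. -/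
def rhoBlock (q : ℕ) : List ℤ :=
  if q = 3 then [3]
  else if Even q then List.replicate (hQ q - 1) 1 ++ [2]
  else List.replicate (hQ q) 1 ++ 2 :: (List.replicate (hQ q - 1) 1 ++ [2])

/-- The periodic sequence `ρ_q`. -/
def rho (q : ℕ) (i : ℕ) : ℤ := (rhoBlock q).getD (i % (rhoBlock q).length) 0

/-- `x` has the infinite regular `λ_q`-CF with digit sequence `A` (with `A 0 = a₀`). -/
def HasRegCF (q : ℕ) (x : ℝ) (A : ℕ → ℤ) : Prop :=
  (∀ i, A (i + 1) ≠ 0) ∧ RegularSeq q (fun i => A (i + 1)) ∧ CFConvergesTo (lamq q) A x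

/-- `x` has the infinite dual regular `λ_q`-CF with digit sequence `A` (with `A 0 = a₀`). -/
def HasDualRegCF (q : ℕ) (x : ℝ) (A : ℕ → ℤ) : Prop :=
  (∀ i, A (i + 1) ≠ 0) ∧ DualRegularSeq q (fun i => A (i + 1)) ∧ CFConvergesTo (lamq q) A x

/-- The digits of `x` produced by the algorithm for `f_q`: `a_{i+1} = ⟨-1 / f_q^i(x)⟩`. -/
noncomputable def digitSeq (lam : ℝ) (x : ℝ) : ℕ → ℤ :=
  fun i => nearestLam lam (-1 / (fq lam)^[i] x)

/-- The digits of `x` produced by the algorithm for `f_q^*`: `b_{i+1} = ⟨-1 / (f_q^*)^i(x)⟩*`. -/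
noncomputable def digitSeqStar (lam R : ℝ) (x : ℝ) : ℕ → ℤ :=
  fun i => nearestDual lam R (-1 / (fqstar lam R)^[i] x)

/-!
For `L = [a₁, …, aₙ]` let `v(L) = 1 / [a₁; a₂, …, aₙ]`, so that `v(a :: L) = 1 / (aλ - v(L))`.
The recursion for the denominators gives `q_{n-1} / q_n = v([a_n, …, a_1])`, and dual regularity of
the digits is regularity of the reversed lists. If regular lists satisfy `|v(L)| ≤ λ/2 < 1`, then
`|q_n|` grows geometrically, and the convergents form a Cauchy sequence because consecutive ones
differ by `1 / (q_n q_{n+1})`.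

With `θ = π/q`, the function `g(x) = sin (xθ) / sin ((x+1)θ)` satisfies
`g(x+1) = 1 / (λ - g(x))` and `g(0) = 0`. As long as all proper tails obey the bound,
`ε v(L) > g(x+1)` forces `L` to start with `ε` and its tail to satisfy `ε v > g(x)`.
* For `q` even, `λ/2 = g(h_q)`, so `ε v(L) > λ/2` makes `L` start with `h_q` digits `ε` and then a
  digit of the sign of `ε`.
* For `q` odd, `λ/2 = g(h_q + 1/2)`, so `L` starts with `h_q` digits `ε`, and the rest has
  `ε v > g(1/2) = 1 / (λ + 1)`. Its first digit is `ε`, or it is `2ε` and what follows has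
  `ε v > λ - 1 = g(h_q)`, hence starts with `h_q` digits `ε` and a digit of the sign of `ε`.

In each case the digits found at the start of `L` form a forbidden block.
-/

section SinRatio

variable {θ x : ℝ}

/-- The function `x ↦ sin (xθ) / sin ((x+1)θ)`, which interpolates the orbit of `0` under
`t ↦ 1 / (2 cos θ - t)`. -/
noncomputable def sinRatio (θ x : ℝ) : ℝ := Real.sin (x * θ) / Real.sin ((x + 1) * θ)

lemma sinRatio_zero : sinRatio θ 0 = 0 := by simp [sinRatio]

lemma sinRatio_nonneg (hθ : 0 ≤ θ) (hx : 0 ≤ x) (h : (x + 1) * θ ≤ Real.pi) :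
    0 ≤ sinRatio θ x :=
  div_nonneg (Real.sin_nonneg_of_nonneg_of_le_pi (by positivity) (by linarith))
    (Real.sin_nonneg_of_nonneg_of_le_pi (by positivity) h)

lemma two_cos_sub_sinRatio (h : Real.sin ((x + 1) * θ) ≠ 0) :
    2 * Real.cos θ - sinRatio θ x = Real.sin ((x + 2) * θ) / Real.sin ((x + 1) * θ) := by
  rw [sinRatio, eq_div_iff h, sub_mul, div_mul_cancel₀ _ h,
    show x * θ = (x + 1) * θ - θ by ring, show (x + 2) * θ = (x + 1) * θ + θ by ring,
    Real.sin_add, Real.sin_sub]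
  ring

lemma sinRatio_add_one (h : Real.sin ((x + 1) * θ) ≠ 0) :
    sinRatio θ (x + 1) = (2 * Real.cos θ - sinRatio θ x)⁻¹ := by
  rw [two_cos_sub_sinRatio h, inv_div, sinRatio, show x + 1 + 1 = x + 2 by ring]

lemma sinRatio_lt_two_cos (hθ : 0 < θ) (hx : 0 ≤ x) (h : (x + 2) * θ < Real.pi) :
    sinRatio θ x < 2 * Real.cos θ := by
  have h₁ : 0 < Real.sin ((x + 1) * θ) :=
    Real.sin_pos_of_pos_of_lt_pi (by positivity) (by linarith)
  have h₂ : 0 < Real.sin ((x + 2) * θ) := Real.sin_pos_of_pos_of_lt_pi (by positivity) h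
  rw [← sub_pos, two_cos_sub_sinRatio h₁.ne']
  positivity

lemma sinRatio_eq_cos (h : (x + 1) * θ = Real.pi / 2) : sinRatio θ x = Real.cos θ := by
  rw [sinRatio, h, show x * θ = Real.pi / 2 - θ by linarith, Real.sin_pi_div_two_sub,
    Real.sin_pi_div_two, div_one]

lemma sinRatio_eq_two_cos_sub_one (h : (x + 3 / 2) * θ = Real.pi / 2)
    (hcos : Real.cos (θ / 2) ≠ 0) : sinRatio θ x = 2 * Real.cos θ - 1 := by
  rw [sinRatio, show x * θ = Real.pi / 2 - 3 * (θ / 2) by linarith,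
    show (x + 1) * θ = Real.pi / 2 - θ / 2 by linarith, Real.sin_pi_div_two_sub,
    Real.sin_pi_div_two_sub, div_eq_iff hcos, Real.cos_three_mul,
    show Real.cos θ = 2 * Real.cos (θ / 2) ^ 2 - 1 by rw [← Real.cos_two_mul]; ring_nf]
  ring

lemma sinRatio_one_half (hsin : Real.sin (θ / 2) ≠ 0) :
    sinRatio θ (1 / 2) = (2 * Real.cos θ + 1)⁻¹ := by
  have h : Real.sin ((1 / 2 + 1) * θ) = Real.sin (θ / 2) * (2 * Real.cos θ + 1) := by
    rw [show (1 / 2 + 1) * θ = 3 * (θ / 2) by ring, show Real.cos θ = Real.cos (2 * (θ / 2)) by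
      ring_nf, Real.sin_three_mul, Real.cos_two_mul, Real.cos_sq']
    ring
  rw [sinRatio, h, show 1 / 2 * θ = θ / 2 by ring, div_mul_cancel_left₀ hsin]

end SinRatio

section Digits

variable {lam u g : ℝ} {b : ℤ}

lemma one_le_of_inv_pos (hu : |u| ≤ lam / 2) (hb : b ≠ 0) (h : 0 < (b * lam - u)⁻¹) : 1 ≤ b := by
  by_contra! hlt
  have hb' : (b : ℝ) ≤ -1 := by exact_mod_cast (by lia : b ≤ -1)
  have := abs_le.1 hu
  nlinarith [inv_pos.1 h]

lemma eq_one_of_inv_lt_inv (hu : |u| ≤ lam / 2) (hb : b ≠ 0) (hg : 0 ≤ g) (hlt : g < lam)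
    (h : (lam - g)⁻¹ < (b * lam - u)⁻¹) : b = 1 ∧ g < u := by
  have hpos : 0 < (b * lam - u)⁻¹ := (inv_pos.2 (sub_pos.2 hlt)).trans h
  have hb1 : 1 ≤ b := one_le_of_inv_pos hu hb hpos
  have hsub : b * lam - u < lam - g :=
    (inv_lt_inv₀ (sub_pos.2 hlt) (inv_pos.1 hpos)).1 h
  obtain rfl : b = 1 := by
    by_contra hne
    have hb2 : (2 : ℝ) ≤ b := by exact_mod_cast (by lia : 2 ≤ b)
    nlinarith [(abs_le.1 hu).2]
  exact ⟨rfl, by push_cast at hsub; linarith⟩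

lemma eq_one_or_eq_two_of_inv_lt_inv (hu : |u| ≤ lam / 2) (hb : b ≠ 0) (hlam : 1 ≤ lam)
    (h : (lam + 1)⁻¹ < (b * lam - u)⁻¹) : b = 1 ∨ b = 2 ∧ lam - 1 < u := by
  have hpos : 0 < (b * lam - u)⁻¹ := (inv_pos.2 (by linarith)).trans h
  have hb1 : 1 ≤ b := one_le_of_inv_pos hu hb hpos
  have hsub : b * lam - u < lam + 1 := (inv_lt_inv₀ (by linarith) (inv_pos.1 hpos)).1 h
  have hb3 : b < 3 := by
    by_contra! hle
    have hb3 : (3 : ℝ) ≤ b := by exact_mod_cast hle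
    nlinarith [(abs_le.1 hu).2]
  obtain rfl | rfl : b = 1 ∨ b = 2 := by lia
  · exact .inl rfl
  · exact .inr ⟨rfl, by push_cast at hsub; linarith⟩

lemma intCast_mul_ne_of_abs_le (hlam : 0 < lam) (hu : |u| ≤ lam / 2) (hb : b ≠ 0) :
    b * lam ≠ u := by
  rintro rfl
  have hb' : (1 : ℝ) ≤ |(b : ℝ)| := by exact_mod_cast Int.one_le_abs hb
  rw [abs_mul, abs_of_pos hlam] at hu
  nlinarith

end Digits

section FiniteFractions

variable {lam θ x : ℝ} {ε a : ℤ} {L : List ℤ}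

/-- The reciprocal `1 / [a₁; a₂, …, aₙ]` of a finite `λ`-continued fraction, with value `0` for
the empty one and, as `0⁻¹ = 0`, where a denominator vanishes. -/
noncomputable def cfInv (lam : ℝ) : List ℤ → ℝ
  | [] => 0
  | a :: L => (a * lam - cfInv lam L)⁻¹

lemma sign_mul_cfInv_cons (hε : ε = 1 ∨ ε = -1) :
    ε * cfInv lam (a :: L) = ((ε * a : ℤ) * lam - ε * cfInv lam L)⁻¹ := by
  rcases hε with rfl | rfl
  · simp [cfInv]
  · rw [cfInv, Int.cast_neg, Int.cast_one, neg_one_mul, ← inv_neg]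
    push_cast
    ring_nf

lemma abs_sign_mul (hε : ε = 1 ∨ ε = -1) (u : ℝ) : |ε * u| = |u| := by
  rcases hε with rfl | rfl <;> simp

lemma eq_sign_mul_of_sign_mul_eq {b : ℤ} (hε : ε = 1 ∨ ε = -1) (h : ε * a = b) : a = ε * b := by
  rcases hε with rfl | rfl <;> lia

/-- The digits of the list are nonzero and all its proper tails have reciprocal value in
`[-λ/2, λ/2]`: the inductive hypothesis in the proof that regular lists have reciprocal value in
that interval. -/
def HasBoundedTails (lam : ℝ) : List ℤ → Prop
  | [] => True
  | a :: L => a ≠ 0 ∧ |cfInv lam L| ≤ lam / 2 ∧ HasBoundedTails lam L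

lemma HasBoundedTails.sign_mul (hε : ε = 1 ∨ ε = -1) (hL : HasBoundedTails lam (a :: L)) :
    ε * a ≠ 0 ∧ |ε * cfInv lam L| ≤ lam / 2 :=
  ⟨mul_ne_zero (by rcases hε with rfl | rfl <;> decide) hL.1, (abs_sign_mul hε _).trans_le hL.2.1⟩

lemma HasBoundedTails.exists_eq_cons_of_pos (hε : ε = 1 ∨ ε = -1) (hL : HasBoundedTails lam L)
    (h : 0 < ε * cfInv lam L) : ∃ m M, 1 ≤ m ∧ L = ε * m :: M := by
  cases L with
  | nil => simp [cfInv] at h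
  | cons a M =>
    obtain ⟨hb, hu⟩ := hL.sign_mul hε
    rw [sign_mul_cfInv_cons hε] at h
    exact ⟨ε * a, M, one_le_of_inv_pos hu hb h, by rw [← eq_sign_mul_of_sign_mul_eq hε rfl]⟩

lemma HasBoundedTails.exists_eq_cons_of_inv_add_one_lt (hε : ε = 1 ∨ ε = -1) (hlam : 1 ≤ lam)
    (hL : HasBoundedTails lam L) (h : (lam + 1)⁻¹ < ε * cfInv lam L) :
    ∃ M, L = ε :: M ∨
      L = ε * 2 :: M ∧ HasBoundedTails lam M ∧ lam - 1 < ε * cfInv lam M := by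
  obtain ⟨m, M, -, rfl⟩ := hL.exists_eq_cons_of_pos hε ((inv_pos.2 (by linarith)).trans h)
  obtain ⟨hb, hu⟩ := hL.sign_mul hε
  rw [sign_mul_cfInv_cons hε] at h
  obtain hb1 | ⟨hb2, hgt⟩ := eq_one_or_eq_two_of_inv_lt_inv hu hb hlam h
  · exact ⟨M, .inl (by rw [eq_sign_mul_of_sign_mul_eq hε hb1, mul_one])⟩
  · exact ⟨M, .inr ⟨by rw [eq_sign_mul_of_sign_mul_eq hε hb2], hL.2.2, hgt⟩⟩

lemma HasBoundedTails.exists_eq_cons_of_sinRatio_lt (hε : ε = 1 ∨ ε = -1) (hθ : 0 < θ)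
    (hx : 0 ≤ x) (hxθ : (x + 2) * θ < Real.pi) (hL : HasBoundedTails (2 * Real.cos θ) L)
    (h : sinRatio θ (x + 1) < ε * cfInv (2 * Real.cos θ) L) :
    ∃ M, L = ε :: M ∧ HasBoundedTails (2 * Real.cos θ) M ∧
      sinRatio θ x < ε * cfInv (2 * Real.cos θ) M := by
  have hg : 0 ≤ sinRatio θ x := sinRatio_nonneg hθ.le hx (by linarith)
  have hlt : sinRatio θ x < 2 * Real.cos θ := sinRatio_lt_two_cos hθ hx hxθ
  have hsin : 0 < Real.sin ((x + 1) * θ) :=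
    Real.sin_pos_of_pos_of_lt_pi (by positivity) (by linarith)
  rw [sinRatio_add_one hsin.ne'] at h
  obtain ⟨m, M, -, rfl⟩ := hL.exists_eq_cons_of_pos hε ((inv_pos.2 (sub_pos.2 hlt)).trans h)
  obtain ⟨hb, hu⟩ := hL.sign_mul hε
  rw [sign_mul_cfInv_cons hε] at h
  obtain ⟨hb1, hgu⟩ := eq_one_of_inv_lt_inv hu hb hg hlt h
  exact ⟨M, by rw [eq_sign_mul_of_sign_mul_eq hε hb1, mul_one], hL.2.2, hgu⟩

lemma HasBoundedTails.exists_eq_replicate_append (hε : ε = 1 ∨ ε = -1) (hθ : 0 < θ)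
    (hx : 0 ≤ x) (k : ℕ) (hk : (x + k + 1) * θ < Real.pi) (hL : HasBoundedTails (2 * Real.cos θ) L)
    (h : sinRatio θ (x + k) < ε * cfInv (2 * Real.cos θ) L) :
    ∃ M, L = List.replicate k ε ++ M ∧ HasBoundedTails (2 * Real.cos θ) M ∧
      sinRatio θ x < ε * cfInv (2 * Real.cos θ) M := by
  induction k generalizing L with
  | zero => exact ⟨L, rfl, hL, by simpa using h⟩
  | succ k ih =>
    rw [Nat.cast_succ, ← add_assoc] at h hk
    obtain ⟨N, rfl, hN, hlt⟩ :=
      hL.exists_eq_cons_of_sinRatio_lt hε hθ (by positivity) (by linarith) h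
    obtain ⟨M, rfl, hM, hlt⟩ := ih (by linarith) hN hlt
    exact ⟨M, by rw [List.replicate_succ, List.cons_append], hM, hlt⟩

lemma HasBoundedTails.exists_replicate_append_prefix (hε : ε = 1 ∨ ε = -1) (hθ : 0 < θ)
    (k : ℕ) (hk : (k + 1) * θ < Real.pi) (hL : HasBoundedTails (2 * Real.cos θ) L)
    (h : sinRatio θ k < ε * cfInv (2 * Real.cos θ) L) :
    ∃ m, 1 ≤ m ∧ List.replicate k ε ++ [ε * m] <+: L := by
  rw [← zero_add (k : ℝ)] at h hk
  obtain ⟨M, rfl, hM, hpos⟩ := hL.exists_eq_replicate_append hε hθ le_rfl k hk h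
  rw [sinRatio_zero] at hpos
  obtain ⟨m, N, hm, rfl⟩ := hM.exists_eq_cons_of_pos hε hpos
  exact ⟨m, hm, by simp⟩

end FiniteFractions

section RegularLists

variable {q : ℕ} {ε : ℤ} {L : List ℤ}

lemma one_le_lamq (hq : 3 ≤ q) : 1 ≤ lamq q := by
  have hle : Real.pi / q ≤ Real.pi / 3 := by gcongr; exact_mod_cast hq
  have hcos : Real.cos (Real.pi / 3) ≤ Real.cos (Real.pi / q) :=
    Real.cos_le_cos_of_nonneg_of_le_pi (by positivity) (by linarith [Real.pi_pos]) hle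
  rw [Real.cos_pi_div_three] at hcos
  rw [lamq]
  linarith

lemma lamq_lt_two (hq : q ≠ 0) : lamq q < 2 := by
  have hle : Real.pi / q ≤ Real.pi :=
    div_le_self Real.pi_pos.le (by exact_mod_cast Nat.one_le_iff_ne_zero.2 hq)
  have hcos : Real.cos (Real.pi / q) < Real.cos 0 :=
    Real.cos_lt_cos_of_nonneg_of_le_pi le_rfl hle (by positivity)
  rw [Real.cos_zero] at hcos
  rw [lamq]
  linarith

lemma hQ_add_one_mul_pi_div (hq : q ≠ 0) (he : Even q) :
    (hQ q + 1) * (Real.pi / q) = Real.pi / 2 := by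
  have h : 2 * (hQ q + 1) = q := by rw [hQ, if_pos he]; obtain ⟨k, rfl⟩ := he; lia
  have hq' : (q : ℝ) = 2 * (hQ q + 1) := by exact_mod_cast h.symm
  rw [hq']
  field_simp

lemma hQ_add_three_halves_mul_pi_div (hq : 3 ≤ q) (ho : ¬ Even q) :
    (hQ q + 3 / 2) * (Real.pi / q) = Real.pi / 2 := by
  have h : 2 * hQ q + 3 = q := by
    rw [hQ, if_neg ho]; obtain ⟨k, rfl⟩ := Nat.not_even_iff_odd.1 ho; lia
  have hq' : (2 * hQ q + 3 : ℝ) = q := by exact_mod_cast h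
  replace hq' : (q : ℝ) = 2 * (hQ q + 3 / 2) := by linarith
  rw [hq']
  field_simp

lemma exists_isForbidden_prefix_of_even (hq : q ≠ 0) (he : Even q) (hε : ε = 1 ∨ ε = -1)
    (hL : HasBoundedTails (lamq q) L) (h : lamq q / 2 < ε * cfInv (lamq q) L) :
    ∃ B, B <+: L ∧ IsForbidden q B := by
  have hθ := hQ_add_one_mul_pi_div hq he
  have hhalf : lamq q / 2 = sinRatio (Real.pi / q) (hQ q) := by
    rw [sinRatio_eq_cos hθ, lamq]; ring
  rw [hhalf] at h
  obtain ⟨m, hm, hpre⟩ := hL.exists_replicate_append_prefix hε (by positivity) (hQ q)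
    (hθ.trans_lt (by linarith [Real.pi_pos])) h
  exact ⟨_, hpre, ε, hε, .inr (by rw [if_pos he]; exact ⟨m, hm, rfl⟩)⟩

lemma exists_isForbidden_prefix_of_not_even (hq : 3 ≤ q) (ho : ¬ Even q) (hε : ε = 1 ∨ ε = -1)
    (hL : HasBoundedTails (lamq q) L) (h : lamq q / 2 < ε * cfInv (lamq q) L) :
    ∃ B, B <+: L ∧ IsForbidden q B := by
  have hθ := hQ_add_three_halves_mul_pi_div hq ho
  have hθ0 : 0 < Real.pi / q := by positivity
  have hθ1 : Real.pi / q < Real.pi := div_lt_self Real.pi_pos (by exact_mod_cast (by lia : 1 < q))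
  have hhalf : lamq q / 2 = sinRatio (Real.pi / q) (1 / 2 + hQ q) := by
    rw [sinRatio_eq_cos (by linarith), lamq]; ring
  have hsub_one : lamq q - 1 = sinRatio (Real.pi / q) (hQ q) :=
    (sinRatio_eq_two_cos_sub_one hθ
      (Real.cos_pos_of_mem_Ioo ⟨by linarith, by linarith⟩).ne').symm
  have hinv : sinRatio (Real.pi / q) (1 / 2) = (lamq q + 1)⁻¹ :=
    sinRatio_one_half (Real.sin_pos_of_pos_of_lt_pi (by linarith) (by linarith)).ne'
  rw [hhalf] at h
  obtain ⟨M, rfl, hM, hlt⟩ := hL.exists_eq_replicate_append hε hθ0 (by norm_num) (hQ q)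
    (by linarith [Real.pi_pos]) h
  obtain ⟨N, rfl | ⟨rfl, hN, hgt⟩⟩ :=
    hM.exists_eq_cons_of_inv_add_one_lt hε (one_le_lamq hq) (hinv ▸ hlt)
  · exact ⟨List.replicate (hQ q + 1) ε, by simp [List.replicate_succ'], ε, hε, .inl rfl⟩
  · obtain ⟨m, hm, hpre⟩ := hN.exists_replicate_append_prefix hε hθ0 (hQ q)
      (by linarith [Real.pi_pos]) (hsub_one.symm.trans_lt hgt)
    exact ⟨List.replicate (hQ q) ε ++ ε * 2 :: (List.replicate (hQ q) ε ++ [ε * m]),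
      by simpa using hpre, ε, hε, .inr (by rw [if_neg ho]; exact ⟨m, hm, rfl⟩)⟩

lemma HasBoundedTails.abs_cfInv_le (hq : 3 ≤ q) (hL : HasBoundedTails (lamq q) L)
    (hr : RegularList q L) : |cfInv (lamq q) L| ≤ lamq q / 2 := by
  have hle (ε : ℤ) (hε : ε = 1 ∨ ε = -1) : ε * cfInv (lamq q) L ≤ lamq q / 2 := by
    by_contra! hlt
    obtain ⟨B, hpre, hB⟩ : ∃ B, B <+: L ∧ IsForbidden q B := by
      by_cases he : Even q
      · exact exists_isForbidden_prefix_of_even (by lia) he hε hL hlt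
      · exact exists_isForbidden_prefix_of_not_even hq he hε hL hlt
    exact hr B hpre.isInfix hB
  exact abs_le'.2 ⟨by simpa using hle 1 (.inl rfl), by simpa using hle (-1) (.inr rfl)⟩

lemma RegularList.hasBoundedTails (hq : 3 ≤ q) (hr : RegularList q L) (h0 : 0 ∉ L) :
    HasBoundedTails (lamq q) L := by
  induction L with
  | nil => trivial
  | cons a L ih =>
    rw [List.mem_cons, not_or] at h0
    have hrL : RegularList q L := fun B hB => hr B (hB.trans (List.suffix_cons a L).isInfix)
    have hL := ih hrL h0.2
    exact ⟨Ne.symm h0.1, hL.abs_cfInv_le hq hrL, hL⟩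

theorem RegularList.abs_cfInv_le (hq : 3 ≤ q) (hr : RegularList q L) (h0 : 0 ∉ L) :
    |cfInv (lamq q) L| ≤ lamq q / 2 :=
  (hr.hasBoundedTails hq h0).abs_cfInv_le hq hr

end RegularLists

section ReversedDigits

variable {q : ℕ} {a : ℕ → ℤ}

/-- The list `[a_{n-1}, …, a_0]` of the first `n` terms of a sequence, most recent first. -/
def revTake (a : ℕ → ℤ) (n : ℕ) : List ℤ := (List.ofFn fun j : Fin n => a j).reverse

lemma revTake_zero : revTake a 0 = [] := rfl

lemma revTake_succ (n : ℕ) : revTake a (n + 1) = a n :: revTake a n := by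
  rw [revTake, List.ofFn_succ_last, List.reverse_append]
  rfl

lemma zero_notMem_revTake (h : ∀ i, a i ≠ 0) (n : ℕ) : 0 ∉ revTake a n := by
  simp [revTake, List.mem_ofFn, h]

lemma exists_eq_ofFn_of_infix {α : Type*} {a : ℕ → α} {n : ℕ} {B : List α}
    (h : B <:+: List.ofFn fun j : Fin n => a j) :
    ∃ l, B = List.ofFn fun j : Fin B.length => a (l + j) := by
  obtain ⟨l, -, hl⟩ := List.infix_iff_getElem?.1 h
  refine ⟨l, List.ext_getElem (by simp) fun i hi _ => ?_⟩
  have := hl i hi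
  grind

lemma DualRegularSeq.regularList_revTake (h : DualRegularSeq q a) (n : ℕ) :
    RegularList q (revTake a n) := by
  intro B hB hf
  rw [revTake, ← List.reverse_infix, List.reverse_reverse] at hB
  obtain ⟨l, hl⟩ := exists_eq_ofFn_of_infix hB
  exact h l _ (by rwa [← hl, List.reverse_reverse])

end ReversedDigits

section Convergence

variable {lam r : ℝ} {A : ℕ → ℤ}

lemma cfQ_eq_cfInv_mul_cfQ_succ
    (h : ∀ n, A (n + 1) * lam ≠ cfInv lam (revTake (fun i => A (i + 1)) n)) (n : ℕ) :
    cfQ lam A n = cfInv lam (revTake (fun i => A (i + 1)) (n + 1)) * cfQ lam A (n + 1) := by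
  rw [revTake_succ, cfInv, eq_inv_mul_iff_mul_eq₀ (sub_ne_zero.2 (h n))]
  cases n with
  | zero => simp [revTake_zero, cfInv, cfQ]
  | succ n => rw [sub_mul, ← cfQ_eq_cfInv_mul_cfQ_succ h n, cfQ]

lemma cfP_succ_mul_cfQ_sub (n : ℕ) :
    cfP lam A (n + 1) * cfQ lam A n - cfP lam A n * cfQ lam A (n + 1) = -1 := by
  induction n with
  | zero => simp only [cfP, cfQ]; ring
  | succ n ih => rw [cfP, cfQ]; linear_combination ih

lemma one_le_pow_mul_abs_cfQ (hr : 0 ≤ r) (h : ∀ n, |cfQ lam A n| ≤ r * |cfQ lam A (n + 1)|)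
    (n : ℕ) : 1 ≤ r ^ n * |cfQ lam A n| := by
  induction n with
  | zero => simp [cfQ]
  | succ n ih =>
    calc 1 ≤ r ^ n * |cfQ lam A n| := ih
      _ ≤ r ^ n * (r * |cfQ lam A (n + 1)|) := by gcongr; exact h n
      _ = r ^ (n + 1) * |cfQ lam A (n + 1)| := by rw [pow_succ, mul_assoc]

lemma cfQ_ne_zero (hr : 0 ≤ r) (h : ∀ n, |cfQ lam A n| ≤ r * |cfQ lam A (n + 1)|) (n : ℕ) :
    cfQ lam A n ≠ 0 := by
  intro h0
  simpa [h0] using zero_lt_one.trans_le (one_le_pow_mul_abs_cfQ hr h n)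

lemma dist_cfP_div_cfQ_succ {n : ℕ} (h₀ : cfQ lam A n ≠ 0) (h₁ : cfQ lam A (n + 1) ≠ 0) :
    dist (cfP lam A n / cfQ lam A n) (cfP lam A (n + 1) / cfQ lam A (n + 1)) =
      |cfQ lam A n|⁻¹ * |cfQ lam A (n + 1)|⁻¹ := by
  have hsub : cfP lam A n / cfQ lam A n - cfP lam A (n + 1) / cfQ lam A (n + 1) =
      (cfQ lam A n)⁻¹ * (cfQ lam A (n + 1))⁻¹ := by
    field_simp
    linear_combination -cfP_succ_mul_cfQ_sub (lam := lam) (A := A) n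
  rw [Real.dist_eq, hsub, abs_mul, abs_inv, abs_inv]

theorem exists_tendsto_cfP_div_cfQ (hr : 0 ≤ r) (hr1 : r < 1)
    (h : ∀ n, |cfQ lam A n| ≤ r * |cfQ lam A (n + 1)|) :
    ∃ x, Tendsto (fun n => cfP lam A n / cfQ lam A n) atTop (𝓝 x) := by
  have hne := cfQ_ne_zero hr h
  have hinv (n : ℕ) : |cfQ lam A n|⁻¹ ≤ r ^ n :=
    (inv_le_iff_one_le_mul₀ (abs_pos.2 (hne n))).2 (one_le_pow_mul_abs_cfQ hr h n)
  refine cauchySeq_tendsto_of_complete (cauchySeq_of_le_geometric r 1 hr1 fun n => ?_)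
  calc dist (cfP lam A n / cfQ lam A n) (cfP lam A (n + 1) / cfQ lam A (n + 1))
      = |cfQ lam A n|⁻¹ * |cfQ lam A (n + 1)|⁻¹ := dist_cfP_div_cfQ_succ (hne n) (hne (n + 1))
    _ ≤ r ^ n * r ^ (n + 1) := by gcongr <;> exact hinv _
    _ ≤ r ^ n * 1 := by gcongr; exact pow_le_one₀ hr hr1.le
    _ = 1 * r ^ n := mul_comm _ _

end Convergence

/-- Every dual regular `λ_q`-CF converges: the denominators `q_n` never vanish and the
convergents `p_n/q_n` converge in `ℝ`. -/
theorem stmt2 (q : ℕ) (hq : 3 ≤ q) (A : ℕ → ℤ)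
    (hnz : ∀ i, A (i + 1) ≠ 0) (hdreg : DualRegularSeq q (fun i => A (i + 1))) :
    (∀ n, cfQ (lamq q) A n ≠ 0) ∧
      ∃ x : ℝ, Filter.Tendsto (fun n => cfP (lamq q) A n / cfQ (lamq q) A n)
        Filter.atTop (nhds x) := by
  have hlam : 0 < lamq q := zero_lt_one.trans_le (one_le_lamq hq)
  have hlt : lamq q / 2 < 1 := by linarith [lamq_lt_two (by lia : q ≠ 0)]
  have hbound (n : ℕ) : |cfInv (lamq q) (revTake (fun i => A (i + 1)) n)| ≤ lamq q / 2 :=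
    (hdreg.regularList_revTake n).abs_cfInv_le hq (zero_notMem_revTake hnz n)
  have hden (n : ℕ) := intCast_mul_ne_of_abs_le hlam (hbound n) (hnz n)
  have hgrowth (n : ℕ) : |cfQ (lamq q) A n| ≤ lamq q / 2 * |cfQ (lamq q) A (n + 1)| := by
    rw [cfQ_eq_cfInv_mul_cfQ_succ hden, abs_mul]
    gcongr
    exact hbound (n + 1)
  exact ⟨cfQ_ne_zero (half_pos hlam).le hgrowth,
    exists_tendsto_cfP_div_cfQ (half_pos hlam).le hlt hgrowth⟩
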